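/- Let α > 0, ν > 0 and u ∈ [0,1]. Then (1/B(2α,ν+1)) ∫_u^1 (1−t)^ν · t · (t²−u²)^{α−1} dt = (B(α,ν+1)/(2^{ν+1} B(2α,ν+1))) · (1−u²)^{ν+α} · ₂F₁(ν/2, (ν+1)/2; ν+α+1; 1−u²). -/

import Mathlib

/-!
The substitution `s = (t² - u²) / x`, with `x = 1 - u²`, turns the left-hand integral into
`(x^α / 2) ∫₀¹ s^(α-1) (1 - √(1 - w))^ν ds`, where `w = x (1 - s)` (`integral_substitution`).
Since `(1 - √(1-w)) (1 + √(1-w)) = w`, the classical closed form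

  `₂F₁(ν/2, (ν+1)/2; ν+1; w) = (2 / (1 + √(1-w)))^ν`  (`hypF_mul_rpow`)

expands `(1 - √(1-w))^ν` as `(w/2)^ν` times a power series in `w` with positive coefficients.
Integrating term by term (`integral_expand`) produces the Beta integrals `B(α, ν+1+n)`, and
`B(α, ν+1+n) = B(α, ν+1) (ν+1)_n / (ν+α+1)_n` replaces the lower parameter `ν+1` by `ν+α+1`.

The closed form is proved on the real interval `(0, 1)`. With `F` the hypergeometric series and
`K = F + (2/ν) x F'`, the recurrence of the coefficients is a first-order linear system for `(F, K)`
(`hyp_system`). For `p = F - √(1-x) K` it gives `x p' = -(ν/2) (1 + 1/√(1-x)) p` with `p(0) = 0`.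
Hence `p²` is nonincreasing and `p = 0` (`hypF_eq_sqrt_mul_compF`). Then `F` solves a scalar
first-order equation, and `F (1 + √(1-x))^ν` has derivative zero.
-/

open scoped Real BigOperators

/-- The rising factorial (Pochhammer symbol) `(x)_j = x(x+1)⋯(x+j-1)`. -/
noncomputable def poch (x : ℝ) (j : ℕ) : ℝ := ∏ i ∈ Finset.range j, (x + i)

/-- The Beta function `B(x,y) = Γ(x)Γ(y)/Γ(x+y)`. -/
noncomputable def betaFn (x y : ℝ) : ℝ := Real.Gamma x * Real.Gamma y / Real.Gamma (x + y)

/-- The Gauss hypergeometric function `₂F₁(a,b;c;x)`. -/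
noncomputable def hyp2F1 (a b c x : ℝ) : ℝ :=
  ∑' n : ℕ, poch a n * poch b n / (poch c n * (Nat.factorial n : ℝ)) * x ^ n

open Filter Topology Set MeasureTheory

/-! ### Rising factorials -/

lemma poch_succ (x : ℝ) (n : ℕ) : poch x (n + 1) = poch x n * (x + n) := by
  rw [poch, poch, Finset.prod_range_succ]

lemma poch_pos {x : ℝ} (hx : 0 < x) (n : ℕ) : 0 < poch x n :=
  Finset.prod_pos fun _ _ => by positivity

/-! ### Power series with coefficient ratio tending to one -/

lemma tendsto_affine_ratio (p q : ℝ) :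
    Tendsto (fun n : ℕ => ((n : ℝ) + p) / ((n : ℝ) + q)) atTop (𝓝 1) := by
  have hp : Tendsto (fun n : ℕ => p / (n : ℝ)) atTop (𝓝 0) := tendsto_const_div_atTop_nhds_zero_nat p
  have hq : Tendsto (fun n : ℕ => q / (n : ℝ)) atTop (𝓝 0) := tendsto_const_div_atTop_nhds_zero_nat q
  have h := (hp.const_add 1).div (hq.const_add 1) (by norm_num)
  simp only [add_zero, div_one] at h
  refine h.congr' ?_
  filter_upwards [eventually_gt_atTop 0] with n hn
  have : (n : ℝ) ≠ 0 := by positivity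
  simp only [Pi.div_apply]
  rw [show (n : ℝ) + p = n * (1 + p / n) by field_simp,
    show (n : ℝ) + q = n * (1 + q / n) by field_simp, mul_div_mul_left _ _ this]

lemma summable_of_ratio_one {c : ℕ → ℝ} (hc : ∀ᶠ n in atTop, 0 < c n)
    (hr : Tendsto (fun n => c (n + 1) / c n) atTop (𝓝 1)) {r : ℝ} (hr0 : 0 < r) (hr1 : r < 1) :
    Summable fun n => c n * r ^ n := by
  refine summable_of_ratio_test_tendsto_lt_one hr1 ?_ ?_
  · filter_upwards [hc] with n hn using by positivity
  · have h := hr.mul_const r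
    rw [one_mul] at h
    refine h.congr' ?_
    filter_upwards [hc, (tendsto_add_atTop_nat 1).eventually hc] with n hn hn'
    rw [Real.norm_of_nonneg (by positivity), Real.norm_of_nonneg (by positivity)]
    field_simp
    ring

lemma ratio_natCast_mul {c : ℕ → ℝ} (hr : Tendsto (fun n => c (n + 1) / c n) atTop (𝓝 1)) :
    Tendsto (fun n : ℕ => (((n + 1 : ℕ) : ℝ) * c (n + 1)) / (n * c n)) atTop (𝓝 1) := by
  have h := (tendsto_affine_ratio 1 0).mul hr
  rw [one_mul] at h
  refine h.congr fun n => ?_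
  push_cast
  rw [add_zero, div_mul_div_comm]

/-- Inside the unit interval, a power series with positive coefficients of ratio tending to `1` may
be differentiated termwise. -/
lemma hasDerivAt_powerSeries {c : ℕ → ℝ} (hc : ∀ n, 0 < c n)
    (hr : Tendsto (fun n => c (n + 1) / c n) atTop (𝓝 1)) {x : ℝ} (hx0 : 0 ≤ x) (hx1 : x < 1) :
    ∃ d, HasDerivAt (fun z => ∑' n, c n * z ^ n) d x ∧
      HasSum (fun n : ℕ => (n * c n) * x ^ n) (x * d) := by
  obtain ⟨r, hxr, hr1⟩ := exists_between hx1
  have hr0 : 0 < r := hx0.trans_lt hxr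
  have hcn : ∀ᶠ n : ℕ in atTop, 0 < n * c n := by
    filter_upwards [eventually_gt_atTop 0] with n hn
    exact mul_pos (by exact_mod_cast hn) (hc n)
  have hs := summable_of_ratio_one hcn (ratio_natCast_mul hr) hr0 hr1
  have hu : Summable fun n : ℕ => c n * (n * r ^ (n - 1)) := by
    refine (hs.mul_left r⁻¹).congr fun n => ?_
    rcases n with _ | n
    · simp
    · simp only [Nat.add_sub_cancel, pow_succ]
      field_simp
  have hbound : ∀ (n : ℕ) (y : ℝ), y ∈ Ioo (-r) r →
      ‖c n * (n * y ^ (n - 1))‖ ≤ c n * (n * r ^ (n - 1)) := by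
    intro n y hy
    rw [norm_mul, norm_mul, norm_pow, Real.norm_of_nonneg (hc n).le,
      Real.norm_of_nonneg (Nat.cast_nonneg n)]
    have := (hc n).le
    have hyr : ‖y‖ ≤ r := (abs_lt.2 hy).le
    gcongr
  have hxm : x ∈ Ioo (-r) r := ⟨by linarith, hxr⟩
  refine ⟨∑' n : ℕ, c n * (n * x ^ (n - 1)), ?_, ?_⟩
  · refine hasDerivAt_tsum_of_isPreconnected (t := Ioo (-r) r) (y₀ := 0) hu isOpen_Ioo
      isPreconnected_Ioo (fun n y _ => (hasDerivAt_pow n y).const_mul (c n)) hbound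
      ⟨by linarith, hr0⟩ ?_ hxm
    exact summable_of_ne_finset_zero (s := {0}) fun n hn => by
      simp only [Finset.mem_singleton] at hn
      simp [hn]
  · have := ((Summable.of_norm_bounded hu fun n => hbound n x hxm).hasSum).mul_left x
    refine this.congr_fun fun n => ?_
    rcases n with _ | n
    · simp
    · simp only [Nat.add_sub_cancel, pow_succ]
      ring

/-! ### The closed form of `₂F₁(ν/2, (ν+1)/2; ν+1; ·)` -/

/-- The coefficients of `₂F₁(ν/2, (ν+1)/2; ν+1; ·)`. -/
noncomputable def hypCoeff (ν : ℝ) (n : ℕ) : ℝ :=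
  poch (ν / 2) n * poch ((ν + 1) / 2) n / (poch (ν + 1) n * (Nat.factorial n : ℝ))

lemma hypCoeff_pos {ν : ℝ} (hν : 0 < ν) (n : ℕ) : 0 < hypCoeff ν n := by
  have h1 := poch_pos (half_pos hν) n
  have h2 := poch_pos (show 0 < (ν + 1) / 2 by positivity) n
  have h3 := poch_pos (show 0 < ν + 1 by positivity) n
  unfold hypCoeff
  positivity

lemma hypCoeff_succ {ν : ℝ} (hν : 0 < ν) (n : ℕ) :
    hypCoeff ν (n + 1) * ((n + 1) * (ν + 1 + n)) =
      hypCoeff ν n * ((ν / 2 + n) * ((ν + 1) / 2 + n)) := by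
  have h3 := poch_pos (show 0 < ν + 1 by positivity) n
  have h4 : 0 < ν + 1 + n := by positivity
  simp only [hypCoeff, poch_succ, Nat.factorial_succ]
  push_cast
  field_simp

lemma hypCoeff_ratio {ν : ℝ} (hν : 0 < ν) :
    Tendsto (fun n => hypCoeff ν (n + 1) / hypCoeff ν n) atTop (𝓝 1) := by
  have h := (tendsto_affine_ratio (ν / 2) 1).mul (tendsto_affine_ratio ((ν + 1) / 2) (ν + 1))
  rw [one_mul] at h
  refine h.congr fun n => ?_
  have h1 := hypCoeff_pos hν n
  have h4 : 0 < (n : ℝ) + (ν + 1) := by positivity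
  have h5 : 0 < (n : ℝ) + 1 := by positivity
  rw [div_mul_div_comm, div_eq_div_iff (by positivity) (by positivity)]
  linarith [hypCoeff_succ hν n]

/-- The coefficients of the companion series `F + (2/ν) x F'`, where `F` has the coefficients
`hypCoeff ν`; this is the expansion of `F / √(1 - x)`. -/
noncomputable def compCoeff (ν : ℝ) (n : ℕ) : ℝ := (2 * n + ν) / ν * hypCoeff ν n

lemma compCoeff_pos {ν : ℝ} (hν : 0 < ν) (n : ℕ) : 0 < compCoeff ν n :=
  mul_pos (by positivity) (hypCoeff_pos hν n)

lemma compCoeff_ratio {ν : ℝ} (hν : 0 < ν) :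
    Tendsto (fun n => compCoeff ν (n + 1) / compCoeff ν n) atTop (𝓝 1) := by
  have h := (tendsto_affine_ratio (1 + ν / 2) (ν / 2)).mul (hypCoeff_ratio hν)
  rw [one_mul] at h
  refine h.congr fun n => ?_
  have h1 := hypCoeff_pos hν n
  unfold compCoeff
  push_cast
  have h2 : 0 < (n : ℝ) + ν / 2 := by positivity
  have h3 : 0 < 2 * (n : ℝ) + ν := by positivity
  field_simp
  ring

/-- The power series of `₂F₁(ν/2, (ν+1)/2; ν+1; ·)`. -/
noncomputable def hypF (ν x : ℝ) : ℝ := ∑' n, hypCoeff ν n * x ^ n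

/-- The sum of the companion series. -/
noncomputable def compF (ν x : ℝ) : ℝ := ∑' n, compCoeff ν n * x ^ n

lemma hypF_zero (ν : ℝ) : hypF ν 0 = 1 := by
  rw [hypF, tsum_eq_single 0 fun n hn => by simp [hn]]
  simp [hypCoeff, poch]

lemma compF_zero {ν : ℝ} (hν : 0 < ν) : compF ν 0 = 1 := by
  rw [compF, tsum_eq_single 0 fun n hn => by simp [hn]]
  simp [compCoeff, hypCoeff, poch, hν.ne']

lemma hypF_hasSum {ν x : ℝ} (hν : 0 < ν) (hx0 : 0 < x) (hx1 : x < 1) :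
    HasSum (fun n => hypCoeff ν n * x ^ n) (hypF ν x) :=
  (summable_of_ratio_one (.of_forall (hypCoeff_pos hν)) (hypCoeff_ratio hν) hx0 hx1).hasSum

lemma compF_hasSum {ν x : ℝ} (hν : 0 < ν) (hx0 : 0 < x) (hx1 : x < 1) :
    HasSum (fun n => compCoeff ν n * x ^ n) (compF ν x) :=
  (summable_of_ratio_one (.of_forall (compCoeff_pos hν)) (compCoeff_ratio hν) hx0 hx1).hasSum

/-- The hypergeometric equation, written as a first-order linear system for the pair
`(hypF, compF)`. -/
lemma hyp_system {ν x : ℝ} (hν : 0 < ν) (hx0 : 0 < x) (hx1 : x < 1) :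
    ∃ d e, HasDerivAt (hypF ν) d x ∧ HasDerivAt (compF ν) e x ∧
      x * d = ν / 2 * (compF ν x - hypF ν x) ∧
      (1 - x) * (x * e) =
        ν / 2 * (hypF ν x - (1 - x) * compF ν x) + x / 2 * compF ν x := by
  obtain ⟨d, hd, hds⟩ := hasDerivAt_powerSeries (hypCoeff_pos hν) (hypCoeff_ratio hν) hx0.le hx1
  obtain ⟨e, he, hes⟩ := hasDerivAt_powerSeries (compCoeff_pos hν) (compCoeff_ratio hν) hx0.le hx1
  have hF := hypF_hasSum hν hx0 hx1
  have hK := compF_hasSum hν hx0 hx1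
  refine ⟨d, e, hd, he, ?_, ?_⟩
  · refine hds.unique (((hK.sub hF).mul_left (ν / 2)).congr_fun fun n => ?_)
    unfold compCoeff
    field_simp
    ring
  · have hL := (hes.add (hK.mul_left (ν / 2))).sub (hF.mul_left (ν / 2))
    have hR := (hes.add (hK.mul_left (ν / 2 + 1 / 2))).mul_left x
    -- The constant term of `hL` vanishes; shifting it by one matches the extra factor `x` in `hR`.
    rw [← hasSum_nat_add_iff' 1] at hL
    have h := hL.unique (hR.congr_fun fun n => ?_)
    · simp [compCoeff, hν.ne'] at h
      linarith
    · have h := hypCoeff_succ hν n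
      unfold compCoeff
      push_cast
      rw [pow_succ]
      have h2 : (n + 1 : ℝ) * ((2 * (n + 1) + ν) / ν * hypCoeff ν (n + 1)) +
          ν / 2 * ((2 * (n + 1) + ν) / ν * hypCoeff ν (n + 1)) - ν / 2 * hypCoeff ν (n + 1) =
          n * ((2 * n + ν) / ν * hypCoeff ν n) +
            (ν / 2 + 1 / 2) * ((2 * n + ν) / ν * hypCoeff ν n) := by
        field_simp
        linear_combination 4 * h
      linear_combination x ^ n * x * h2

lemma hasDerivAt_sqrt_one_sub {x : ℝ} (hx1 : x < 1) :
    HasDerivAt (fun z => √(1 - z)) (-(1 / (2 * √(1 - x)))) x := by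
  have := ((hasDerivAt_id x).const_sub 1).sqrt (by simp; linarith)
  simpa [neg_div] using this

lemma hypF_continuousOn {ν : ℝ} (hν : 0 < ν) : ContinuousOn (hypF ν) (Ico 0 1) := fun x hx => by
  obtain ⟨d, hd, -⟩ := hasDerivAt_powerSeries (hypCoeff_pos hν) (hypCoeff_ratio hν) hx.1 hx.2
  exact hd.continuousAt.continuousWithinAt

lemma compF_continuousOn {ν : ℝ} (hν : 0 < ν) : ContinuousOn (compF ν) (Ico 0 1) := fun x hx => by
  obtain ⟨d, hd, -⟩ := hasDerivAt_powerSeries (compCoeff_pos hν) (compCoeff_ratio hν) hx.1 hx.2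
  exact hd.continuousAt.continuousWithinAt

/-- With `p = F - √(1-x) K`, the system gives `x p' = -(ν/2)(1 + 1/√(1-x)) p`, so `p²` cannot grow
from its initial value `0`. -/
lemma hypF_eq_sqrt_mul_compF {ν x : ℝ} (hν : 0 < ν) (hx0 : 0 < x) (hx1 : x < 1) :
    hypF ν x = √(1 - x) * compF ν x := by
  set p : ℝ → ℝ := fun z => hypF ν z - √(1 - z) * compF ν z with hp
  have hder : ∀ y ∈ Ioo 0 x, ∃ p', HasDerivAt p p' y ∧ p y * p' ≤ 0 := by
    intro y hy
    have hy1 : y < 1 := hy.2.trans hx1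
    obtain ⟨d, e, hd, he, hsd, hse⟩ := hyp_system hν hy.1 hy1
    refine ⟨_, hd.sub ((hasDerivAt_sqrt_one_sub hy1).mul he), ?_⟩
    have hg : 0 < √(1 - y) := Real.sqrt_pos.2 (by linarith)
    have hgg : √(1 - y) ^ 2 = 1 - y := Real.sq_sqrt (by linarith)
    set g := √(1 - y) with hgdef
    have hpy : p y = hypF ν y - g * compF ν y := rfl
    have key : y * (d - (-(1 / (2 * g)) * compF ν y + g * e)) = -(ν / 2 * (1 + 1 / g)) * p y := by
      rw [hpy]
      have hse' : g ^ 2 * (y * e) = ν / 2 * (hypF ν y - g ^ 2 * compF ν y) + y / 2 * compF ν y := by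
        rw [hgg]; exact hse
      field_simp
      linear_combination 2 * g * hsd - 2 * hse'
    have h2 : y * (p y * (d - (-(1 / (2 * g)) * compF ν y + g * e))) ≤ 0 := by
      have : 0 ≤ ν / 2 * (1 + 1 / g) * (p y) ^ 2 := by positivity
      calc y * (p y * (d - (-(1 / (2 * g)) * compF ν y + g * e)))
          = p y * (y * (d - (-(1 / (2 * g)) * compF ν y + g * e))) := by ring
        _ = -(ν / 2 * (1 + 1 / g) * (p y) ^ 2) := by rw [key]; ring
        _ ≤ 0 := by linarith
    exact nonpos_of_mul_nonpos_right h2 hy.1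
  choose! p' hp' hpp using hder
  have hsub : Icc 0 x ⊆ Ico 0 1 := fun y hy => ⟨hy.1, hy.2.trans_lt hx1⟩
  have hcont : ContinuousOn (fun z => p z ^ 2) (Icc 0 x) := by
    have h1 := (hypF_continuousOn hν).mono hsub
    have h2 := (compF_continuousOn hν).mono hsub
    fun_prop
  -- The mean value theorem needs no derivative at the endpoint `0`.
  obtain ⟨y, hy, hslope⟩ := exists_hasDerivAt_eq_slope (fun z => p z ^ 2)
    (fun y => 2 * (p y * p' y)) hx0 hcont
    fun y hy => by
      have := (hp' y hy).pow 2
      refine this.congr_deriv ?_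
      simp; ring
  have hp0 : p 0 = 0 := by simp [hp, hypF_zero, compF_zero hν]
  have hle := hpp y hy
  rw [eq_div_iff (by linarith), hp0] at hslope
  have : p x ^ 2 ≤ 0 := by nlinarith
  have : p x = 0 := by
    have := le_antisymm this (sq_nonneg _)
    exact pow_eq_zero_iff (two_ne_zero) |>.1 this
  simp only [hp] at this
  linarith

/-- The closed form `₂F₁(ν/2, (ν+1)/2; ν+1; x) = (2 / (1 + √(1-x)))^ν`. -/
lemma hypF_mul_rpow {ν x : ℝ} (hν : 0 < ν) (hx0 : 0 < x) (hx1 : x < 1) :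
    hypF ν x * (1 + √(1 - x)) ^ ν = 2 ^ ν := by
  have hsub : Icc 0 x ⊆ Ico 0 1 := fun y hy => ⟨hy.1, hy.2.trans_lt hx1⟩
  have hcont : ContinuousOn (fun z => hypF ν z * (1 + √(1 - z)) ^ ν) (Icc 0 x) := by
    have h1 := (hypF_continuousOn hν).mono hsub
    refine h1.mul (ContinuousOn.rpow_const (by fun_prop) fun z _ => Or.inr hν.le)
  have hder : ∀ y ∈ Ioo 0 x,
      HasDerivAt (fun z => hypF ν z * (1 + √(1 - z)) ^ ν) 0 y := by
    intro y hy
    have hy1 : y < 1 := hy.2.trans hx1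
    obtain ⟨d, e, hd, -, hsd, -⟩ := hyp_system hν hy.1 hy1
    have hFK := hypF_eq_sqrt_mul_compF hν hy.1 hy1
    have hg : 0 < √(1 - y) := Real.sqrt_pos.2 (by linarith)
    have hgg : √(1 - y) ^ 2 = 1 - y := Real.sq_sqrt (by linarith)
    refine (hd.mul (((hasDerivAt_sqrt_one_sub hy1).const_add 1).rpow_const (p := ν)
      (Or.inl (by positivity)))).congr_deriv ?_
    set g := √(1 - y) with hgdef
    have hpow : (1 + g) ^ ν = (1 + g) ^ (ν - 1) * (1 + g) := by
      rw [← Real.rpow_add_one (by positivity)]; simp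
    rw [hpow]
    set P := (1 + g) ^ (ν - 1)
    have hy0 := hy.1.ne'
    -- `y = 1 - g²`, so the factor `1 - g ≠ 0` cancels from the equation `y F' = (ν/2)(1 - g) K`.
    have key : d * (1 + g) = hypF ν y * (1 / (2 * g) * ν) := by
      rw [hFK] at hsd ⊢
      have hy' : y = (1 - g) * (1 + g) := by linear_combination hgg
      have hd' : d * (1 + g) = ν / 2 * compF ν y := by
        have h1 : 1 - g ≠ 0 := by
          intro h; rw [h, zero_mul] at hy'; exact hy0 hy'
        apply mul_left_cancel₀ h1
        linear_combination hsd - d * hy'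
      rw [hd']
      field_simp
    linear_combination P * key
  -- The mean value theorem needs no derivative at the endpoint `0`.
  obtain ⟨y, hy, hslope⟩ := exists_hasDerivAt_eq_slope _ (fun _ => 0) hx0 hcont hder
  rw [eq_div_iff (by linarith), zero_mul] at hslope
  simp only [hypF_zero, sub_zero, Real.sqrt_one, one_mul] at hslope
  norm_num at hslope
  linarith

/-! ### Beta integrals -/

lemma Gamma_add_natCast {z : ℝ} (hz : 0 < z) (n : ℕ) :
    Real.Gamma (z + n) = poch z n * Real.Gamma z := by
  induction n with
  | zero => simp [poch]
  | succ n ih =>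
    push_cast
    rw [← add_assoc, Real.Gamma_add_one (by positivity), ih, poch_succ]
    ring

lemma betaFn_add_natCast {a b : ℝ} (ha : 0 < a) (hb : 0 < b) (n : ℕ) :
    betaFn a (b + n) = betaFn a b * (poch b n / poch (a + b) n) := by
  have hab : 0 < a + b := by positivity
  have h1 := poch_pos hab n
  have h2 := Real.Gamma_pos_of_pos hab
  rw [betaFn, betaFn, ← add_assoc, Gamma_add_natCast hb, Gamma_add_natCast hab]
  field_simp

lemma lintegral_beta {a b : ℝ} (ha : 0 < a) (hb : 0 < b) :
    ∫⁻ s in Ioo (0 : ℝ) 1, ENNReal.ofReal (s ^ (a - 1) * (1 - s) ^ (b - 1)) =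
      ENNReal.ofReal (betaFn a b) := by
  have hB : 0 < betaFn a b := ProbabilityTheory.beta_pos ha hb
  have h := ProbabilityTheory.lintegral_betaPDF_eq_one ha hb
  rw [ProbabilityTheory.lintegral_betaPDF] at h
  calc ∫⁻ s in Ioo (0 : ℝ) 1, ENNReal.ofReal (s ^ (a - 1) * (1 - s) ^ (b - 1))
      = ∫⁻ s in Ioo (0 : ℝ) 1, ENNReal.ofReal (betaFn a b) *
          ENNReal.ofReal (1 / ProbabilityTheory.beta a b * s ^ (a - 1) * (1 - s) ^ (b - 1)) := by
        refine lintegral_congr fun s => ?_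
        rw [← ENNReal.ofReal_mul hB.le]
        congr 1
        change _ = betaFn a b * (1 / betaFn a b * _ * _)
        field_simp
    _ = ENNReal.ofReal (betaFn a b) := by
        rw [lintegral_const_mul' _ _ ENNReal.ofReal_ne_top, h, mul_one]

/-! ### Substitution and termwise integration -/

/-- The substitution `s = (t² - u²) / (1 - u²)`. -/
lemma integral_substitution {α ν u : ℝ} (hu0 : 0 ≤ u) (hu1 : u < 1) :
    ∫ t in u..1, (1 - t) ^ ν * t * (t ^ 2 - u ^ 2) ^ (α - 1) =
      (1 - u ^ 2) ^ α / 2 *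
        ∫ s in Ioo (0 : ℝ) 1, s ^ (α - 1) * (1 - √(1 - (1 - u ^ 2) * (1 - s))) ^ ν := by
  set x := 1 - u ^ 2 with hx
  have hx0 : 0 < x := by nlinarith
  have himg : (fun t => (t ^ 2 - u ^ 2) / x) '' Ioo u 1 = Ioo 0 1 := by
    ext s
    constructor
    · rintro ⟨t, ⟨ht0, ht1⟩, rfl⟩
      exact ⟨div_pos (by nlinarith) hx0, (div_lt_one hx0).2 (by nlinarith)⟩
    · rintro ⟨hs0, hs1⟩
      have hxs := mul_pos hx0 hs0
      refine ⟨√(u ^ 2 + x * s), ⟨Real.lt_sqrt_of_sq_lt (by linarith), ?_⟩, ?_⟩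
      · rw [Real.sqrt_lt' one_pos]
        nlinarith
      · simp only
        rw [Real.sq_sqrt (by positivity)]
        field_simp
        ring
  have hinj : InjOn (fun t => (t ^ 2 - u ^ 2) / x) (Ioo u 1) := by
    intro t ht t' ht' h
    have h2 : t ^ 2 = t' ^ 2 := by
      have := (div_left_inj' hx0.ne').1 h
      linarith
    exact (pow_left_inj₀ (hu0.trans ht.1.le) (hu0.trans ht'.1.le) two_ne_zero).1 h2
  have hder : ∀ t ∈ Ioo u 1,
      HasDerivWithinAt (fun t => (t ^ 2 - u ^ 2) / x) (2 * t / x) (Ioo u 1) t := fun t _ => by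
    have := ((hasDerivAt_pow 2 t).sub_const (u ^ 2)).div_const x
    exact (this.congr_deriv (by simp)).hasDerivWithinAt
  rw [← himg, integral_image_eq_integral_abs_deriv_smul measurableSet_Ioo hder hinj,
    intervalIntegral.integral_of_le hu1.le, integral_Ioc_eq_integral_Ioo, ← integral_const_mul]
  refine setIntegral_congr_fun measurableSet_Ioo fun t ht => ?_
  have ht0 : 0 < t := hu0.trans_lt ht.1
  have htu : 0 < t ^ 2 - u ^ 2 := by nlinarith [ht.1]
  have hsq : 1 - x * (1 - (t ^ 2 - u ^ 2) / x) = t ^ 2 := by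
    field_simp
    rw [hx]
    ring
  simp only [smul_eq_mul]
  rw [hsq, Real.sqrt_sq ht0.le, abs_of_pos (by positivity), Real.div_rpow htu.le hx0.le,
    show x ^ α = x ^ (α - 1) * x by rw [← Real.rpow_add_one hx0.ne']; simp]
  have : 0 < x ^ (α - 1) := by positivity
  field_simp

/-- The closed form of `hypF`, multiplied by `(1 - √(1-w))^ν`. -/
lemma one_sub_sqrt_rpow {ν w : ℝ} (hν : 0 < ν) (hw0 : 0 < w) (hw1 : w < 1) :
    (1 - √(1 - w)) ^ ν = 2⁻¹ ^ ν * w ^ ν * hypF ν w := by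
  have hg : 0 ≤ √(1 - w) := Real.sqrt_nonneg _
  have hgg : √(1 - w) ^ 2 = 1 - w := Real.sq_sqrt (by linarith)
  have h := hypF_mul_rpow hν hw0 hw1
  have hmul : (1 - √(1 - w)) * (1 + √(1 - w)) = w := by linear_combination -hgg
  have h1 : 0 ≤ 1 - √(1 - w) := by nlinarith
  have hpos : 0 < (1 + √(1 - w)) ^ ν := by positivity
  apply mul_right_cancel₀ hpos.ne'
  rw [← Real.mul_rpow h1 (by positivity), hmul, mul_assoc, h, mul_right_comm,
    ← Real.mul_rpow (by norm_num) (by norm_num)]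
  norm_num

/-- Termwise integration of the expansion of `(1 - √(1-w))^ν`, `w = x(1-s)`. All terms are
nonnegative, so the exchange takes place in `ℝ≥0∞`; only the finiteness of each single Beta integral
is needed to return to real numbers. -/
lemma integral_expand {α ν x : ℝ} (hα : 0 < α) (hν : 0 < ν) (hx0 : 0 < x) (hx1 : x ≤ 1) :
    ∫ s in Ioo (0 : ℝ) 1, s ^ (α - 1) * (1 - √(1 - x * (1 - s))) ^ ν =
      ∑' n : ℕ, 2⁻¹ ^ ν * x ^ ν * (hypCoeff ν n * x ^ n) * betaFn α (ν + 1 + n) := by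
  have hC : ∀ n : ℕ, 0 ≤ 2⁻¹ ^ ν * x ^ ν * (hypCoeff ν n * x ^ n) := fun n => by
    have := hypCoeff_pos hν n
    positivity
  have hB : ∀ n : ℕ, 0 ≤ betaFn α (ν + 1 + n) := fun n =>
    (ProbabilityTheory.beta_pos hα (show 0 < ν + 1 + n by positivity)).le
  have hpt : ∀ s ∈ Ioo (0 : ℝ) 1,
      ENNReal.ofReal (s ^ (α - 1) * (1 - √(1 - x * (1 - s))) ^ ν) =
      ∑' n : ℕ, ENNReal.ofReal (2⁻¹ ^ ν * x ^ ν * (hypCoeff ν n * x ^ n)) *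
        ENNReal.ofReal (s ^ (α - 1) * (1 - s) ^ (ν + 1 + n - 1)) := by
    rintro s ⟨hs0, hs1⟩
    have hs1' : 0 < 1 - s := by linarith
    have hw0 : 0 < x * (1 - s) := by positivity
    have hw1 : x * (1 - s) < 1 := by nlinarith
    have hsum : HasSum (fun n : ℕ => 2⁻¹ ^ ν * x ^ ν * (hypCoeff ν n * x ^ n) *
        (s ^ (α - 1) * (1 - s) ^ (ν + 1 + n - 1)))
        (s ^ (α - 1) * (1 - √(1 - x * (1 - s))) ^ ν) := by
      rw [one_sub_sqrt_rpow hν hw0 hw1]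
      have := (hypF_hasSum hν hw0 hw1).mul_left
        (s ^ (α - 1) * (2⁻¹ ^ ν * (x * (1 - s)) ^ ν))
      rw [mul_assoc] at this
      refine this.congr_fun fun n => ?_
      rw [show ν + 1 + n - 1 = ν + n by ring, Real.rpow_add hs1', Real.rpow_natCast,
        Real.mul_rpow hx0.le hs1'.le, mul_pow]
      ring
    rw [← hsum.tsum_eq, ENNReal.ofReal_tsum_of_nonneg
      (fun n => mul_nonneg (hC n) (by positivity)) hsum.summable]
    exact tsum_congr fun n => ENNReal.ofReal_mul (hC n)
  rw [integral_eq_lintegral_of_nonneg_ae]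
  · rw [setLIntegral_congr_fun measurableSet_Ioo hpt, lintegral_tsum fun n => by fun_prop]
    simp_rw [lintegral_const_mul' _ _ ENNReal.ofReal_ne_top]
    rw [ENNReal.tsum_toReal_eq fun n => by
      rw [lintegral_beta hα (by positivity)]
      exact ENNReal.mul_ne_top ENNReal.ofReal_ne_top ENNReal.ofReal_ne_top]
    refine tsum_congr fun n => ?_
    rw [lintegral_beta hα (by positivity), ENNReal.toReal_mul, ENNReal.toReal_ofReal (hC n),
      ENNReal.toReal_ofReal (hB n)]
  · refine ae_restrict_of_forall_mem measurableSet_Ioo fun s hs => ?_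
    have h : √(1 - x * (1 - s)) ≤ 1 := by
      refine Real.sqrt_le_iff.2 ⟨zero_le_one, ?_⟩
      nlinarith [hs.2]
    exact mul_nonneg (Real.rpow_nonneg hs.1.le _) (Real.rpow_nonneg (by linarith) _)
  · exact Measurable.aestronglyMeasurable (by fun_prop)

theorem stmt5 (α ν : ℝ) (hα : 0 < α) (hν : 0 < ν) (u : ℝ) (hu : u ∈ Set.Icc (0 : ℝ) 1) :
    (1 / betaFn (2 * α) (ν + 1)) *
        (∫ t in u..1, (1 - t) ^ ν * t * (t ^ 2 - u ^ 2) ^ (α - 1)) =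
      betaFn α (ν + 1) / ((2 : ℝ) ^ (ν + 1) * betaFn (2 * α) (ν + 1)) *
        (1 - u ^ 2) ^ (ν + α) * hyp2F1 (ν / 2) ((ν + 1) / 2) (ν + α + 1) (1 - u ^ 2) := by
  rcases hu.2.eq_or_lt with rfl | hu1
  -- At `u = 1` both sides vanish, the right one because `0 ^ (ν + α) = 0`.
  · simp [Real.zero_rpow (show ν + α ≠ 0 by positivity)]
  have hx0 : 0 < 1 - u ^ 2 := by nlinarith [hu.1]
  rw [integral_substitution hu.1 hu1, integral_expand hα hν hx0 (by nlinarith)]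
  set x := 1 - u ^ 2
  have hterm : ∀ n : ℕ, 2⁻¹ ^ ν * x ^ ν * (hypCoeff ν n * x ^ n) * betaFn α (ν + 1 + n) =
      2⁻¹ ^ ν * x ^ ν * betaFn α (ν + 1) *
        (poch (ν / 2) n * poch ((ν + 1) / 2) n /
          (poch (ν + α + 1) n * (Nat.factorial n : ℝ)) * x ^ n) := fun n => by
    have h1 := poch_pos (show 0 < ν + 1 by positivity) n
    have h2 := poch_pos (show 0 < ν + α + 1 by positivity) n
    rw [betaFn_add_natCast hα (by positivity), show α + (ν + 1) = ν + α + 1 by ring, hypCoeff]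
    field_simp
  simp_rw [hterm]
  rw [tsum_mul_left, ← hyp2F1, Real.rpow_add hx0, Real.rpow_add_one two_ne_zero,
    Real.inv_rpow zero_le_two]
  have h2 : (0 : ℝ) < 2 ^ ν := by positivity
  field_simp
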